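/- There is no elliptic curve E over F_27 with exactly 25 rational points. -/

import Mathlib

/-!
Completing the square, `#W(F) = q + 1 + S` with `S = ∑ χ(f(x))`, where `χ` is the quadratic
character and `f` the 2-torsion cubic. In characteristic three, Euler's criterion `χ(z) = z^(q/2)`
and the power sums over `F` show that `S` is, up to sign, a power of the Hasse invariant `b₂`
modulo `3`. So if `3 ∣ S`, then `f = x³ + bx + c` is an additive polynomial plus a constant.
The kernel of `x³ + bx` has order `1` or `3`. In the first case `S = ∑ χ(x) = 0`. In the second,
`S` is three times a sum of `χ` over a coset of an `𝔽₃`-hyperplane. Since `z^(q/2)` is a product of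
`n` additive functions when `q = 3^n`, that sum vanishes modulo `3` as soon as `n < 2(n - 1)`, by
the argument of Chevalley–Warning. Hence `9 ∣ S` when `q > 9`, whereas `25` points over `𝔽₂₇`
would mean `S = -3`.
-/

open Finset Module

section PowerSums

variable {F : Type*} [Field F] [Fintype F]

theorem sum_pow_card_sub_one : ∑ x : F, x ^ (Fintype.card F - 1) = -1 := by
  classical
  have hq : Fintype.card F - 1 ≠ 0 := (Nat.sub_pos_of_lt Fintype.one_lt_card).ne'
  have hpow (x : F) : x ^ (Fintype.card F - 1) = 1 - if x = 0 then 1 else 0 := by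
    split_ifs with hx
    · rw [hx, zero_pow hq, sub_self]
    · rw [FiniteField.pow_card_sub_one_eq_one x hx, sub_zero]
  simp [hpow]

theorem sum_pow_eq_zero_of_card_sub_one_lt {n : ℕ} (hn : Fintype.card F - 1 < n)
    (hn' : n < 2 * (Fintype.card F - 1)) : ∑ x : F, x ^ n = 0 := by
  obtain ⟨k, rfl⟩ := Nat.exists_eq_add_of_lt hn
  have hpow (x : F) : x ^ (Fintype.card F - 1 + k + 1) = x ^ (k + 1) := by
    rw [add_right_comm, Nat.sub_add_cancel Fintype.card_pos, pow_add, FiniteField.pow_card,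
      pow_succ']
  simp only [hpow]
  exact FiniteField.sum_pow_lt_card_sub_one F _ (by omega)

theorem sum_eval_eq_neg_coeff {f : Polynomial F}
    (hf : f.natDegree < 2 * (Fintype.card F - 1)) :
    ∑ x : F, f.eval x = -f.coeff (Fintype.card F - 1) := by
  simp only [Polynomial.eval_eq_sum_range' hf]
  rw [sum_comm]
  simp only [← mul_sum]
  rw [sum_eq_single (Fintype.card F - 1), sum_pow_card_sub_one, mul_neg_one]
  · intro i hi hne
    rcases hne.lt_or_gt with hlt | hgt
    · rw [FiniteField.sum_pow_lt_card_sub_one F i hlt, mul_zero]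
    · rw [sum_pow_eq_zero_of_card_sub_one_lt hgt (mem_range.mp hi), mul_zero]
  · have := Fintype.one_lt_card (α := F)
    intro h
    exact absurd (mem_range.mpr (by omega)) h

end PowerSums

theorem pow_div_two_of_odd {q : ℕ} (hq : Odd q) (n : ℕ) :
    q ^ n / 2 = q / 2 * ∑ i ∈ range n, q ^ i := by
  obtain ⟨k, rfl⟩ := hq
  have hgeom := geom_sum_mul_add (2 * k) n
  have hpow : (2 * k + 1) ^ n = 2 * (k * ∑ i ∈ range n, (2 * k + 1) ^ i) + 1 := by
    rw [← hgeom]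
    ring
  rw [hpow, show (2 * k + 1) / 2 = k by omega]
  omega

section HasseInvariant

open Polynomial

theorem coeff_mul_expand {R : Type*} [CommSemiring R] {p : ℕ} (hp : 0 < p) {f : R[X]}
    (hf : f.natDegree + 1 < 2 * p) (g : R[X]) (N : ℕ) :
    (f * expand R p g).coeff (p * N + (p - 1)) = f.coeff (p - 1) * g.coeff N := by
  rw [coeff_mul, sum_eq_single (p - 1, p * N), coeff_expand_mul' hp]
  · rintro ⟨i, j⟩ hij hne
    rw [HasAntidiagonal.mem_antidiagonal] at hij
    rw [coeff_expand hp]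
    split_ifs with hj
    · obtain ⟨k, rfl⟩ := hj
      dsimp only at hij ⊢
      rcases lt_trichotomy k N with hk | rfl | hk
      · have hpk : p * (k + 1) ≤ p * N := Nat.mul_le_mul_left p hk
        rw [mul_add_one] at hpk
        rw [coeff_eq_zero_of_natDegree_lt (by omega), zero_mul]
      · obtain rfl : i = p - 1 := by omega
        exact absurd rfl hne
      · have hpk : p * (N + 1) ≤ p * k := Nat.mul_le_mul_left p hk
        rw [mul_add_one] at hpk
        omega
    · exact mul_zero _
  · intro h
    exact absurd (HasAntidiagonal.mem_antidiagonal.mpr (by omega)) h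

theorem coeff_pow_geom_sum {R : Type*} [CommSemiring R] (p : ℕ) [Fact p.Prime] [CharP R p]
    {f : R[X]} (hf : f.natDegree + 1 < 2 * p) (n : ℕ) :
    (f ^ ∑ i ∈ range n, p ^ i).coeff (p ^ n - 1) =
      f.coeff (p - 1) ^ ∑ i ∈ range n, p ^ i := by
  have hp : 0 < p := (Fact.out : p.Prime).pos
  induction n with
  | zero => simp
  | succ n ih =>
    have hexp : p ^ (n + 1) - 1 = p * (p ^ n - 1) + (p - 1) := by
      have := Nat.le_mul_of_pos_right p (pow_pos hp n)
      rw [pow_succ', Nat.mul_sub_one]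
      omega
    have hgeom : ∑ i ∈ range (n + 1), p ^ i = 1 + p * ∑ i ∈ range n, p ^ i := by
      simp only [sum_range_succ', pow_succ', ← mul_sum, pow_zero, add_comm]
    rw [hexp, hgeom, pow_add, pow_one, mul_comm p, pow_mul, ← map_frobenius_expand, map_expand,
      coeff_mul_expand hp hf, coeff_map, ih, frobenius_def, pow_add, pow_one, pow_mul]

theorem sum_quadraticChar_eval_eq_neg_coeff_pow {F : Type*} [Field F] [Fintype F]
    [DecidableEq F] {p n : ℕ} [Fact p.Prime] [CharP F p] (hp : p ≠ 2)
    (hF : Fintype.card F = p ^ n) {f : F[X]} (hf : f.natDegree ≤ 3) :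
    ((∑ x : F, quadraticChar F (f.eval x) : ℤ) : F) =
      -(f ^ (p / 2)).coeff (p - 1) ^ ∑ i ∈ range n, p ^ i := by
  have hchar : ringChar F ≠ 2 := by rwa [ringChar.eq F p]
  have hodd : Odd p := (Fact.out : p.Prime).odd_of_ne_two hp
  have hF1 : 1 < p ^ n := hF ▸ Fintype.one_lt_card
  have hdeg : (f ^ (p ^ n / 2)).natDegree < 2 * (p ^ n - 1) := by
    have hdiv := Nat.two_mul_odd_div_two (Nat.odd_iff.mp (hodd.pow (n := n)))
    have := natDegree_pow_le_of_le (p ^ n / 2) hf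
    omega
  have hdegp : (f ^ (p / 2)).natDegree + 1 < 2 * p := by
    have := natDegree_pow_le_of_le (p / 2) hf
    have := (Fact.out : p.Prime).two_le
    omega
  push_cast
  simp only [quadraticChar_eq_pow_of_char_ne_two' hchar, hF, ← eval_pow]
  rw [sum_eval_eq_neg_coeff (by rwa [hF]), hF, pow_div_two_of_odd hodd, pow_mul,
    coeff_pow_geom_sum p hdegp]

end HasseInvariant

section LinearSubspaces

variable {K : Type*} [Field K] [Fintype K]

theorem sum_eval_algebraMap_eq_zero {A σ : Type*} [CommSemiring A] [Algebra K A] [Fintype σ]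
    [DecidableEq σ] {f : MvPolynomial σ A}
    (hf : f.totalDegree < (Fintype.card K - 1) * Fintype.card σ) :
    ∑ x : σ → K, MvPolynomial.eval (fun j => algebraMap K A (x j)) f = 0 := by
  simp only [MvPolynomial.eval_eq']
  rw [sum_comm]
  refine sum_eq_zero fun d hd => ?_
  have hmonomial : ∑ x : σ → K, ∏ j, x j ^ d j = 0 := by
    have hdeg : (MvPolynomial.monomial d (1 : K)).totalDegree <
        (Fintype.card K - 1) * Fintype.card σ := by
      rw [MvPolynomial.totalDegree_monomial d one_ne_zero]
      exact (MvPolynomial.le_totalDegree hd).trans_lt hf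
    simpa [MvPolynomial.eval_monomial, Finsupp.prod_fintype] using
      MvPolynomial.sum_eval_eq_zero _ hdeg
  simp only [← mul_sum, ← map_pow, ← map_prod, ← map_sum, hmonomial, map_zero, mul_zero]

variable {V : Type*} [AddCommGroup V] [Module K V] [Fintype V]

theorem sum_prod_linearMap_add_eq_zero {A ι : Type*} [CommSemiring A] [Algebra K A] (s : Finset ι)
    (hs : #s < (Fintype.card K - 1) * finrank K V) (l : ι → V →ₗ[K] A) (c : ι → A) :
    ∑ v : V, ∏ i ∈ s, (l i v + c i) = 0 := by
  let b := finBasis K V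
  let L (i : ι) : MvPolynomial (Fin (finrank K V)) A :=
    ∑ j, MvPolynomial.C (l i (b j)) * MvPolynomial.X j + MvPolynomial.C (c i)
  have hdeg (i : ι) : (L i).totalDegree ≤ 1 := by
    refine (MvPolynomial.totalDegree_add _ _).trans (max_le ?_ (by simp))
    refine MvPolynomial.totalDegree_finsetSum_le fun j _ => ?_
    rw [MvPolynomial.C_mul_X_eq_monomial]
    exact (MvPolynomial.totalDegree_monomial_le _ _).trans (by simp)
  have hprod : (∏ i ∈ s, L i).totalDegree <
      (Fintype.card K - 1) * Fintype.card (Fin (finrank K V)) := by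
    rw [Fintype.card_fin]
    calc (∏ i ∈ s, L i).totalDegree ≤ ∑ i ∈ s, (L i).totalDegree :=
          MvPolynomial.totalDegree_finsetProd s L
      _ ≤ #s := by simpa using sum_le_card_nsmul s _ 1 fun i _ => hdeg i
      _ < _ := hs
  rw [← b.equivFun.symm.toEquiv.sum_comp, ← sum_eval_algebraMap_eq_zero hprod]
  refine sum_congr rfl fun x _ => ?_
  simp [L, b, Basis.equivFun_symm_apply, Algebra.smul_def, mul_comm]

variable {F : Type*} [Field F] [Fintype F] [Algebra K F]

theorem pow_card_div_two_eq_prod_frobenius (hK : ringChar K ≠ 2) (x : F) :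
    x ^ (Fintype.card F / 2) = ∏ i ∈ range (finrank K F) ×ˢ range (Fintype.card K / 2),
      (FiniteField.frobeniusAlgHom K F ^ i.1) x := by
  have hodd : Odd (Fintype.card K) := Nat.odd_iff.mpr (FiniteField.odd_card_of_char_ne_two hK)
  simp only [AlgHom.coe_pow, FiniteField.coe_frobeniusAlgHom, pow_iterate]
  rw [prod_product, card_eq_pow_finrank (K := K) (V := F), pow_div_two_of_odd hodd, mul_comm,
    pow_mul, ← prod_pow_eq_pow_sum, ← prod_pow]
  simp only [prod_const, card_range]

end LinearSubspaces

section QuadraticCharacterSums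

variable {K : Type*} [Field K] {V : Type*} [AddCommGroup V] [Module K V] [Fintype V]
  {F : Type*} [Field F] [Fintype F] [DecidableEq F] [Algebra K F]

theorem intCast_sum_quadraticChar_linearMap_add_eq_zero (hK : ringChar K ≠ 2) (l : V →ₗ[K] F)
    (hV : finrank K F < 2 * finrank K V) (c : F) :
    ((∑ v : V, quadraticChar F (l v + c) : ℤ) : F) = 0 := by
  have := Finite.of_injective _ (algebraMap K F).injective
  have := Fintype.ofFinite K
  have hF : ringChar F ≠ 2 := by rwa [← Algebra.ringChar_eq K F]
  have hcount : #(range (finrank K F) ×ˢ range (Fintype.card K / 2)) <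
      (Fintype.card K - 1) * finrank K V := by
    have hhalf : 0 < Fintype.card K / 2 := Nat.div_pos Fintype.one_lt_card two_pos
    rw [card_product, card_range, card_range,
      ← Nat.two_mul_odd_div_two (FiniteField.odd_card_of_char_ne_two hK)]
    calc finrank K F * (Fintype.card K / 2)
        < 2 * finrank K V * (Fintype.card K / 2) := Nat.mul_lt_mul_of_pos_right hV hhalf
      _ = 2 * (Fintype.card K / 2) * finrank K V := by ring
  push_cast
  simp only [quadraticChar_eq_pow_of_char_ne_two' hF, pow_card_div_two_eq_prod_frobenius hK,
    map_add]
  exact sum_prod_linearMap_add_eq_zero _ hcount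
    (fun i => (FiniteField.frobeniusAlgHom K F ^ i.1).toLinearMap ∘ₗ l) _

theorem card_ker_mul_dvd_sum_quadraticChar {p : ℕ} [CharP K p] (hp : p ≠ 2) (l : V →ₗ[K] F)
    (hl : finrank K F < 2 * finrank K l.range) (c : F) :
    (Nat.card l.ker * p : ℤ) ∣ ∑ v : V, quadraticChar F (l v + c) := by
  classical
  obtain ⟨C, hC⟩ := l.ker.exists_isCompl
  have := charP_of_injective_algebraMap' (R := K) (A := F) p
  have hfinrank : finrank K C = finrank K l.range := by
    have := Submodule.finrank_add_eq_of_isCompl hC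
    have := l.finrank_range_add_finrank_ker
    omega
  have hsum : ∑ v : V, quadraticChar F (l v + c) =
      Nat.card l.ker * ∑ v : C, quadraticChar F (l v + c) := by
    rw [← (Submodule.prodEquivOfIsCompl _ _ hC).toEquiv.sum_comp]
    simp [Fintype.sum_prod_type, Nat.card_eq_fintype_card]
  rw [hsum]
  refine mul_dvd_mul_left _ ((CharP.intCast_eq_zero_iff F p _).mp ?_)
  exact intCast_sum_quadraticChar_linearMap_add_eq_zero (by rwa [ringChar.eq K p])
    (l.domRestrict C) (by rwa [hfinrank]) c

end QuadraticCharacterSums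

section CharThree

variable {F : Type*} [Field F] [Algebra (ZMod 3) F]

/-- The additive polynomial `x³ + bx` in characteristic three, encoded as a linear map over the
prime field so that dimensions can be assigned to its kernel and range. -/
def cubeAddMul (b : F) : F →ₗ[ZMod 3] F :=
  (FiniteField.frobeniusAlgHom (ZMod 3) F).toLinearMap + LinearMap.mulLeft (ZMod 3) b

theorem cubeAddMul_apply (b x : F) : cubeAddMul b x = x ^ 3 + b * x := by
  simp [cubeAddMul]

theorem finrank_ker_cubeAddMul_le_one (b : F) :
    finrank (ZMod 3) (cubeAddMul b).ker ≤ 1 := by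
  have hsq {x : F} (hx : x ∈ (cubeAddMul b).ker) (hx0 : x ≠ 0) : x ^ 2 = -b := by
    rw [LinearMap.mem_ker, cubeAddMul_apply] at hx
    exact mul_right_cancel₀ hx0 (by linear_combination hx)
  rcases eq_or_ne (cubeAddMul b).ker ⊥ with hbot | hbot
  · rw [hbot, finrank_bot]
    exact zero_le_one
  obtain ⟨d, hd, hd0⟩ := (Submodule.ne_bot_iff _).mp hbot
  refine finrank_le_one ⟨d, hd⟩ fun ⟨x, hx⟩ => ?_
  simp only [Subtype.ext_iff, SetLike.mk_smul_mk]
  rcases eq_or_ne x 0 with rfl | hx0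
  · exact ⟨0, zero_smul _ _⟩
  rcases sq_eq_sq_iff_eq_or_eq_neg.mp ((hsq hx hx0).trans (hsq hd hd0).symm) with rfl | rfl
  · exact ⟨1, one_smul _ _⟩
  · exact ⟨-1, by simp⟩

theorem nine_dvd_sum_quadraticChar_cubeAddMul [Fintype F] [DecidableEq F]
    (hF : 9 < Fintype.card F) (b c : F) :
    9 ∣ ∑ x : F, quadraticChar F (cubeAddMul b x + c) := by
  have := charP_of_injective_algebraMap' (R := ZMod 3) (A := F) 3
  have hdim : 2 < finrank (ZMod 3) F := by
    rw [card_eq_pow_finrank (K := ZMod 3), ZMod.card] at hF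
    exact (Nat.pow_lt_pow_iff_right (by norm_num : 1 < 3)).mp hF
  have hrank := (cubeAddMul b).finrank_range_add_finrank_ker
  rcases Nat.le_one_iff_eq_zero_or_eq_one.mp (finrank_ker_cubeAddMul_le_one b) with hker | hker
  · have hinj : Function.Injective (cubeAddMul b) :=
      LinearMap.ker_eq_bot.mp (Submodule.finrank_eq_zero.mp hker)
    have hbij : Function.Bijective fun x => cubeAddMul b x + c :=
      Finite.injective_iff_bijective.mp ((add_left_injective c).comp hinj)
    have hF2 : ringChar F ≠ 2 := by rw [ringChar.eq F 3]; norm_num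
    rw [hbij.sum_comp (quadraticChar F), quadraticChar_sum_zero hF2]
    exact dvd_zero 9
  · have hcard : Nat.card (cubeAddMul b).ker = 3 := by
      rw [natCard_eq_pow_finrank (K := ZMod 3), hker, Nat.card_zmod, pow_one]
    have hdvd := card_ker_mul_dvd_sum_quadraticChar (p := 3) (by norm_num) (cubeAddMul b)
      (by omega) c
    rw [hcard] at hdvd
    exact_mod_cast hdvd

end CharThree

section EllipticCurves

open WeierstrassCurve

variable {F : Type*} [Field F]

theorem equation_iff_sq_eq_eval (h2 : (2 : F) ≠ 0) (W : WeierstrassCurve F) (x y : F) :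
    W.toAffine.Equation x y ↔
      (2 * y + W.a₁ * x + W.a₃) ^ 2 = W.twoTorsionPolynomial.toPoly.eval x := by
  rw [Affine.equation_iff, ← mul_right_inj' (pow_ne_zero 2 h2)]
  simp only [twoTorsionPolynomial, Cubic.toPoly, b₂, b₄, b₆, Polynomial.eval_add,
    Polynomial.eval_mul, Polynomial.eval_C, Polynomial.eval_pow, Polynomial.eval_X]
  constructor <;> intro h <;> linear_combination h

theorem natCard_equation_eq [Fintype F] [DecidableEq F] (hF : ringChar F ≠ 2)
    (W : WeierstrassCurve F) (x : F) :
    (Nat.card {y // W.toAffine.Equation x y} : ℤ) =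
      quadraticChar F (W.twoTorsionPolynomial.toPoly.eval x) + 1 := by
  have h2 : (2 : F) ≠ 0 := Ring.two_ne_zero hF
  let completeSquare : F ≃ F :=
    (Equiv.mulLeft₀ 2 h2).trans (Equiv.addRight (W.a₁ * x + W.a₃))
  rw [← quadraticChar_card_sqrts hF, Set.toFinset_card, ← Nat.card_eq_fintype_card]
  congr 1
  refine Nat.card_congr (completeSquare.subtypeEquiv fun y => ?_)
  simp [completeSquare, equation_iff_sq_eq_eval h2, add_assoc]

theorem natCard_affine_point_eq [Fintype F] [DecidableEq F] (hF : ringChar F ≠ 2)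
    (W : WeierstrassCurve F) [W.IsElliptic] :
    (Nat.card W.toAffine.Point : ℤ) =
      Fintype.card F + 1 + ∑ x : F, quadraticChar F (W.twoTorsionPolynomial.toPoly.eval x) := by
  have hcard : Nat.card W.toAffine.Point =
      ∑ x : F, Nat.card {y // W.toAffine.Equation x y} + 1 := by
    rw [Nat.card_congr W.toAffine.pointEquiv, ← Nat.card_sigma,
      ← Nat.card_congr (Equiv.subtypeProdEquivSigmaSubtype fun x y => W.toAffine.Equation x y)]
    exact Finite.card_option
  rw [hcard]
  push_cast
  simp only [natCard_equation_eq hF, sum_add_distrib, sum_const, card_univ, nsmul_one]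
  ring

variable [CharP F 3]

theorem eval_twoTorsionPolynomial_of_b₂_eq_zero (W : WeierstrassCurve F) (h : W.b₂ = 0) (x : F) :
    W.twoTorsionPolynomial.toPoly.eval x = x ^ 3 + 2 * W.b₄ * x + W.b₆ := by
  simp only [twoTorsionPolynomial, Cubic.toPoly, h, Polynomial.eval_add, Polynomial.eval_mul,
    Polynomial.eval_C, Polynomial.eval_pow, Polynomial.eval_X]
  linear_combination x ^ 3 * CharP.cast_eq_zero F 3

theorem b₂_eq_zero_of_three_dvd [Fintype F] [DecidableEq F] (W : WeierstrassCurve F)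
    (h : 3 ∣ ∑ x : F, quadraticChar F (W.twoTorsionPolynomial.toPoly.eval x)) : W.b₂ = 0 := by
  obtain ⟨n, -, hn⟩ := FiniteField.card F 3
  have hhasse := sum_quadraticChar_eval_eq_neg_coeff_pow (by norm_num) hn
    (f := W.twoTorsionPolynomial.toPoly) Polynomial.natDegree_cubic_le
  rw [(CharP.intCast_eq_zero_iff F 3 _).mpr h, pow_one, Cubic.coeff_eq_b, eq_comm,
    neg_eq_zero] at hhasse
  exact eq_zero_of_pow_eq_zero hhasse

end EllipticCurves

theorem stmt_6_general {F : Type*} [Field F] [Fintype F] [CharP F 3] (hF : 9 < Fintype.card F)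
    (W : WeierstrassCurve F) [W.IsElliptic] (hW : Nat.card W.toAffine.Point ≡ 1 [MOD 3]) :
    Nat.card W.toAffine.Point ≡ 1 [MOD 9] := by
  classical
  have hcard := natCard_affine_point_eq (by rw [ringChar.eq F 3]; norm_num) W
  have hq : 9 ∣ Fintype.card F := by
    obtain ⟨n, -, hn⟩ := FiniteField.card F 3
    rw [hn, show 9 = 3 ^ 2 by norm_num] at hF ⊢
    exact pow_dvd_pow 3 ((Nat.pow_lt_pow_iff_right (by norm_num)).mp hF).le
  rw [Nat.ModEq] at hW ⊢
  have hb₂ : W.b₂ = 0 := b₂_eq_zero_of_three_dvd W (by omega)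
  let _ : Algebra (ZMod 3) F := ZMod.algebra F 3
  have hdvd := nine_dvd_sum_quadraticChar_cubeAddMul hF (2 * W.b₄) W.b₆
  simp only [cubeAddMul_apply, ← eval_twoTorsionPolynomial_of_b₂_eq_zero W hb₂] at hdvd
  omega

/-- There is no elliptic curve over the field with 27 elements having exactly 25
rational points. -/
theorem stmt_6 (F : Type*) [Field F] [Fintype F] (hF : Fintype.card F = 27)
    (W : WeierstrassCurve F) [W.IsElliptic] :
    Nat.card W.toAffine.Point ≠ 25 := by
  have : CharP F 3 := charP_of_card_eq_prime_pow (f := 3) hF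
  intro h
  simpa [h, Nat.ModEq] using stmt_6_general (by omega) W
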